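/- Let N ≥ 2, p ∈ (1,∞) and 0 < R < R₁. Then there exist nonempty disjoint open sets Ω₁, Ω₂ ⊆ B_{R₁}(0) such that λ₁(p, Ω₁) < λ₁(p, B_R(0)) and λ₁(p, Ω₂) < λ₁(p, B_{R₁}(0) \ closure(B_R(0))). -/

import Mathlib

open MeasureTheory Metric Set Filter
open scoped RealInnerProductSpace ENNReal Topology

/-- The first Dirichlet eigenvalue of the p-Laplacian on `Ω`, defined variationally as the
infimum of Rayleigh quotients of smooth, not identically zero functions with compact
support contained in `Ω`. -/
noncomputable def lam1 {N : ℕ} (p : ℝ) (Ω : Set (EuclideanSpace ℝ (Fin N))) : ℝ :=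
  sInf { r : ℝ | ∃ u : EuclideanSpace ℝ (Fin N) → ℝ,
    ContDiff ℝ (⊤ : ℕ∞) u ∧ u ≠ 0 ∧ HasCompactSupport u ∧ tsupport u ⊆ Ω ∧
    r = (∫ x in Ω, ‖gradient u x‖ ^ p) / (∫ x in Ω, |u x| ^ p) }

/-- The first standard basis vector `e₁` of `ℝ^N`. -/
noncomputable def e1 (N : ℕ) : EuclideanSpace ℝ (Fin N) :=
  (WithLp.equiv 2 (Fin N → ℝ)).symm (fun i => if (i : ℕ) = 0 then 1 else 0)

/-- The eccentric annulus `Ω_s = B_{R₁}(0) \ closure (B_{R₀}(s e₁))`. -/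
noncomputable def Om (N : ℕ) (R₀ R₁ s : ℝ) : Set (EuclideanSpace ℝ (Fin N)) :=
  ball 0 R₁ \ closure (ball (s • e1 N) R₀)

/-- `u` is a first eigenfunction of the p-Laplacian on `Ω` with eigenvalue `lam`:
C¹ on an open set containing the closure of `Ω`, positive in `Ω`, zero on `∂Ω`, and a weak
solution of `−Δ_p u = lam · u^{p−1}`. -/
def IsFirstEigenfunction {N : ℕ} (p : ℝ) (Ω : Set (EuclideanSpace ℝ (Fin N)))
    (lam : ℝ) (u : EuclideanSpace ℝ (Fin N) → ℝ) : Prop :=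
  (∃ V : Set (EuclideanSpace ℝ (Fin N)), IsOpen V ∧ closure Ω ⊆ V ∧ ContDiffOn ℝ 1 u V) ∧
  (∀ x ∈ Ω, 0 < u x) ∧
  (∀ x ∈ frontier Ω, u x = 0) ∧
  (∀ φ : EuclideanSpace ℝ (Fin N) → ℝ, ContDiff ℝ (⊤ : ℕ∞) φ → HasCompactSupport φ →
    tsupport φ ⊆ Ω →
    ∫ x in Ω, ‖gradient u x‖ ^ (p - 2) * ⟪gradient u x, gradient φ x⟫ =
      lam * ∫ x in Ω, (u x) ^ (p - 1) * φ x)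


lemma norm_gradient_eq {N : ℕ} (u : EuclideanSpace ℝ (Fin N) → ℝ) (x : EuclideanSpace ℝ (Fin N)) :
    ‖gradient u x‖ = ‖fderiv ℝ u x‖ := by
  simp [gradient]

lemma fderiv_zero_off {N : ℕ} {u : EuclideanSpace ℝ (Fin N) → ℝ} {x : EuclideanSpace ℝ (Fin N)}
    (hx : x ∉ tsupport u) : fderiv ℝ u x = 0 := by
  by_contra h
  exact hx (support_fderiv_subset ℝ (f := u) h)

lemma energy_eq {N : ℕ} {p : ℝ} (hp : 1 < p) {Ω : Set (EuclideanSpace ℝ (Fin N))}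
    {u : EuclideanSpace ℝ (Fin N) → ℝ} (hu : tsupport u ⊆ Ω) :
    ∫ x in Ω, ‖gradient u x‖ ^ p = ∫ x, ‖fderiv ℝ u x‖ ^ p := by
  simp only [norm_gradient_eq]
  apply setIntegral_eq_integral_of_forall_compl_eq_zero
  intro x hx
  rw [fderiv_zero_off (fun h => hx (hu h)), norm_zero, Real.zero_rpow (by linarith)]

lemma mass_eq {N : ℕ} {p : ℝ} (hp : 1 < p) {Ω : Set (EuclideanSpace ℝ (Fin N))}
    {u : EuclideanSpace ℝ (Fin N) → ℝ} (hu : tsupport u ⊆ Ω) :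
    ∫ x in Ω, |u x| ^ p = ∫ x, |u x| ^ p := by
  apply setIntegral_eq_integral_of_forall_compl_eq_zero
  intro x hx
  rw [image_eq_zero_of_notMem_tsupport (fun h => hx (hu h)), abs_zero, Real.zero_rpow (by linarith)]

lemma lam1_le {N : ℕ} {p : ℝ} (hp : 1 < p) {Ω : Set (EuclideanSpace ℝ (Fin N))}
    {u : EuclideanSpace ℝ (Fin N) → ℝ} (h1 : ContDiff ℝ (⊤ : ℕ∞) u) (h2 : u ≠ 0)
    (h3 : HasCompactSupport u) (hu : tsupport u ⊆ Ω) :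
    lam1 p Ω ≤ (∫ x, ‖fderiv ℝ u x‖ ^ p) / (∫ x, |u x| ^ p) := by
  apply csInf_le
  · refine ⟨0, ?_⟩
    rintro r ⟨w, -, -, -, -, rfl⟩
    positivity
  · exact ⟨u, h1, h2, h3, hu, by rw [energy_eq hp hu, mass_eq hp hu]⟩

lemma mass_integrable {N : ℕ} {p : ℝ} (hp : 1 < p)
    {u : EuclideanSpace ℝ (Fin N) → ℝ} (h1 : Continuous u) 
    (h3 : HasCompactSupport u) : Integrable (fun x => |u x| ^ p) := by
  apply Continuous.integrable_of_hasCompactSupport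
  · exact h1.abs.rpow_const (fun x => Or.inr (by linarith))
  · exact h3.comp_left (g := fun y => |y| ^ p) (by simp; rw [Real.zero_rpow (by linarith)])

lemma energy_integrable {N : ℕ} {p : ℝ} (hp : 1 < p)
    {u : EuclideanSpace ℝ (Fin N) → ℝ} (h1 : ContDiff ℝ (⊤ : ℕ∞) u) 
    (h3 : HasCompactSupport u) : Integrable (fun x => ‖fderiv ℝ u x‖ ^ p) := by
  apply Continuous.integrable_of_hasCompactSupport
  · exact (h1.continuous_fderiv (by simp)).norm.rpow_const (fun x => Or.inr (by linarith))
  · exact (h3.fderiv ℝ).comp_left (g := fun y => ‖y‖ ^ p) (by simp; rw [Real.zero_rpow (by linarith)])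

lemma mass_pos {N : ℕ} {p : ℝ} (hp : 1 < p)
    {u : EuclideanSpace ℝ (Fin N) → ℝ} (h1 : Continuous u) (h2 : u ≠ 0)
    (h3 : HasCompactSupport u) : 0 < ∫ x, |u x| ^ p := by
  obtain ⟨x, hx⟩ : ∃ x, u x ≠ 0 := by
    by_contra! h
    exact h2 (funext h)
  apply Continuous.integral_pos_of_hasCompactSupport_nonneg_nonzero (x := x)
  · exact h1.abs.rpow_const (fun x => Or.inr (by linarith))
  · exact h3.comp_left (g := fun y => |y| ^ p) (by simp; rw [Real.zero_rpow (by linarith)])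
  · intro x; positivity
  · have : 0 < |u x| := abs_pos.mpr hx
    positivity

lemma test_nonempty {N : ℕ} {p : ℝ} {Ω : Set (EuclideanSpace ℝ (Fin N))} (hΩ : IsOpen Ω)
    (hne : Ω.Nonempty) : { r : ℝ | ∃ u : EuclideanSpace ℝ (Fin N) → ℝ,
    ContDiff ℝ (⊤ : ℕ∞) u ∧ u ≠ 0 ∧ HasCompactSupport u ∧ tsupport u ⊆ Ω ∧
    r = (∫ x in Ω, ‖gradient u x‖ ^ p) / (∫ x in Ω, |u x| ^ p) }.Nonempty := by
  obtain ⟨x, hx⟩ := hne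
  obtain ⟨u, h1, h2, h3, -, h5⟩ := exists_contDiff_tsupport_subset (n := (⊤ : ℕ∞)) (hΩ.mem_nhds hx)
  refine ⟨_, u, h3, ?_, h2, h1, rfl⟩
  intro h
  simp [h] at h5

lemma exists_of_lam1_lt {N : ℕ} {p : ℝ} (hp : 1 < p) {Ω : Set (EuclideanSpace ℝ (Fin N))}
    (hΩ : IsOpen Ω) (hne : Ω.Nonempty) {r : ℝ} (h : lam1 p Ω < r) :
    ∃ u : EuclideanSpace ℝ (Fin N) → ℝ,
    ContDiff ℝ (⊤ : ℕ∞) u ∧ u ≠ 0 ∧ HasCompactSupport u ∧ tsupport u ⊆ Ω ∧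
    (∫ x, ‖fderiv ℝ u x‖ ^ p) < r * (∫ x, |u x| ^ p) := by
  obtain ⟨_, ⟨u, h1, h2, h3, h4, rfl⟩, h⟩ := exists_lt_of_csInf_lt (test_nonempty hΩ hne) h
  rw [energy_eq hp h4, mass_eq hp h4, div_lt_iff₀ (mass_pos hp h1.continuous h2 h3)] at h
  exact ⟨u, h1, h2, h3, h4, h⟩

lemma le_lam1 {N : ℕ} {p : ℝ} (hp : 1 < p) {Ω : Set (EuclideanSpace ℝ (Fin N))}
    (hΩ : IsOpen Ω) (hne : Ω.Nonempty) {r : ℝ} (h : ∀ u : EuclideanSpace ℝ (Fin N) → ℝ,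
    ContDiff ℝ (⊤ : ℕ∞) u → u ≠ 0 → HasCompactSupport u → tsupport u ⊆ Ω →
    r * (∫ x, |u x| ^ p) ≤ (∫ x, ‖fderiv ℝ u x‖ ^ p)) : r ≤ lam1 p Ω := by
  by_contra! hc
  obtain ⟨u, h1, h2, h3, h4, h5⟩ := exists_of_lam1_lt hp hΩ hne hc
  linarith [h u h1 h2 h3 h4]

open ContinuousLinearMap in
/-- Mollification decreases the energy. -/
lemma mollify_energy {N : ℕ} {p : ℝ} (hp : 1 < p) {v : EuclideanSpace ℝ (Fin N) → ℝ} {C : NNReal}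
    (hv : LipschitzWith C v) (hc : HasCompactSupport v)
    (φ : ContDiffBump (0 : EuclideanSpace ℝ (Fin N))) :
    ∫ x, ‖fderiv ℝ (convolution (φ.normed volume) v (lsmul ℝ ℝ) volume) x‖ ^ p ≤
      ∫ x, ‖fderiv ℝ v x‖ ^ p := by
  set ρ := φ.normed volume with hρ
  have hρ0 : ∀ x, 0 ≤ ρ x := φ.nonneg_normed
  have hρi : Integrable ρ := φ.integrable_normed
  have hρ1 : ∫ x, ρ x = 1 := φ.integral_normed
  have hρc : Continuous ρ := φ.continuous_normed
  have hbd : ∀ x, ‖fderiv ℝ v x‖ ≤ C := fun x => norm_fderiv_le_of_lipschitz ℝ hv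
  have hm : Measurable (fderiv ℝ v) := measurable_fderiv ℝ v
  set g : EuclideanSpace ℝ (Fin N) → ℝ := fun x => ‖fderiv ℝ v x‖ ^ p with hg
  have hgm : Measurable g := hm.norm.pow_const p
  have hg0 : ∀ x, 0 ≤ g x := fun x => by positivity
  have hgb : ∀ x, g x ≤ (C : ℝ) ^ p := fun x =>
    Real.rpow_le_rpow (norm_nonneg _) (hbd x) (by linarith)
  have hgi : Integrable g := by
    have : IntegrableOn g (tsupport v) := by
      apply Measure.integrableOn_of_bounded (M := (C : ℝ) ^ p) hc.isCompact.measure_lt_top.ne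
        hgm.aestronglyMeasurable
      refine Eventually.of_forall fun x => ?_
      rw [Real.norm_of_nonneg (hg0 x)]
      exact hgb x
    rwa [integrableOn_iff_integrable_of_support_subset] at this
    intro x hx
    by_contra h
    apply hx
    simp only [hg]
    rw [fderiv_zero_off h, norm_zero, Real.zero_rpow (by linarith)]
  have key : ∀ x, ‖fderiv ℝ (convolution ρ v (lsmul ℝ ℝ) volume) x‖ ^ p ≤
      convolution ρ g (lsmul ℝ ℝ) volume x := by
    intro x
    have hmx : Measurable (fun t => fderiv ℝ v (x - t)) := hm.comp (measurable_const.sub measurable_id)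
    have hae : ∀ᵐ t, DifferentiableAt ℝ v (x - t) := by
      have h := hv.ae_differentiableAt (μ := (volume : Measure (EuclideanSpace ℝ (Fin N))))
      exact (quasiMeasurePreserving_sub_left volume x).ae h
    have hd := hasFDerivAt_integral_of_dominated_loc_of_lip (𝕜 := ℝ) (μ := volume) (x₀ := x)
      (F := fun y t => ρ t • v (y - t)) (F' := fun t => ρ t • fderiv ℝ v (x - t)) (s := univ)
      (bound := fun t => ρ t * C) univ_mem ?_ ?_ ?_ ?_ ?_ ?_
    · have h1 : fderiv ℝ (convolution ρ v (lsmul ℝ ℝ) volume) x = ∫ t, ρ t • fderiv ℝ v (x - t) :=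
        hd.2.fderiv
      rw [h1]
      have h2 : ‖∫ t, ρ t • fderiv ℝ v (x - t)‖ ≤ ∫ t, ρ t * ‖fderiv ℝ v (x - t)‖ := by
        refine (norm_integral_le_integral_norm _).trans (le_of_eq ?_)
        congr 1; ext t
        rw [norm_smul, Real.norm_of_nonneg (hρ0 t)]
      refine (Real.rpow_le_rpow (norm_nonneg _) h2 (by linarith)).trans ?_
      -- Jensen
      set μ : Measure (EuclideanSpace ℝ (Fin N)) :=
        volume.withDensity (fun t => ENNReal.ofReal (ρ t)) with hμ
      have : IsProbabilityMeasure μ := by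
        constructor
        rw [hμ, withDensity_apply _ MeasurableSet.univ, Measure.restrict_univ,
          ← ofReal_integral_eq_lintegral_ofReal hρi (Eventually.of_forall hρ0), hρ1, ENNReal.ofReal_one]
      have hInt : ∀ h : EuclideanSpace ℝ (Fin N) → ℝ, ∫ t, h t ∂μ = ∫ t, ρ t * h t := by
        intro h
        rw [hμ, integral_withDensity_eq_integral_toReal_smul (by fun_prop) (by simp)]
        congr 1; ext t
        rw [ENNReal.toReal_ofReal (hρ0 t), smul_eq_mul]
      have hJ := ConvexOn.map_integral_le (μ := μ) (f := fun t => ‖fderiv ℝ v (x - t)‖)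
        (convexOn_rpow hp.le) (Real.continuous_rpow_const (by linarith)).continuousOn isClosed_Ici
        (Eventually.of_forall fun t => norm_nonneg _) ?_ ?_
      · rw [hInt, hInt] at hJ
        exact hJ
      · refine Integrable.of_bound hmx.norm.aestronglyMeasurable C (Eventually.of_forall fun t => ?_)
        simpa using hbd _
      · refine Integrable.of_bound (hmx.norm.pow_const p).aestronglyMeasurable ((C : ℝ) ^ p)
          (Eventually.of_forall fun t => ?_)
        have := hgb (x - t)
        rw [Function.comp, Real.norm_of_nonneg (by positivity)]
        exact this
    · refine Eventually.of_forall fun y => ?_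
      have := hv.continuous
      exact (by fun_prop : Continuous (fun t => ρ t • v (y - t))).aestronglyMeasurable
    · have := hv.continuous
      exact (by fun_prop : Continuous (fun t => ρ t • v (x - t))).integrable_of_hasCompactSupport
        (φ.hasCompactSupport_normed.smul_right)
    · exact (hρc.measurable.smul hmx).aestronglyMeasurable
    · refine Eventually.of_forall fun t => ?_
      apply LipschitzWith.lipschitzOnWith
      apply LipschitzWith.of_dist_le_mul
      intro y z
      have h3 := hv.dist_le_mul (y - t) (z - t)
      rw [dist_sub_right] at h3
      rw [dist_smul₀, Real.norm_of_nonneg (hρ0 t)]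
      simp only [Real.coe_nnabs]
      rw [abs_of_nonneg (mul_nonneg (hρ0 t) C.coe_nonneg), mul_assoc]
      exact mul_le_mul_of_nonneg_left h3 (hρ0 t)
    · exact hρi.mul_const _
    · filter_upwards [hae] with t ht
      have h4 : HasFDerivAt (fun y => v (y - t)) (fderiv ℝ v (x - t)) x := by
        have := (hasFDerivAt_comp_sub (f := v) (f' := fderiv ℝ v (x - t)) (x := x) (a := t)).2 ht.hasFDerivAt
        exact this
      exact h4.const_smul (ρ t)
  calc _ ≤ ∫ x, convolution ρ g (lsmul ℝ ℝ) volume x := by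
        apply integral_mono_of_nonneg
        · exact Eventually.of_forall fun x => by positivity
        · exact hρi.integrable_convolution _ hgi
        · exact Eventually.of_forall key
    _ = ∫ x, g x := by
        rw [integral_convolution _ hρi hgi, hρ1]
        simp

lemma lam1_mul_le {N : ℕ} {p : ℝ} (hp : 1 < p) {Ω : Set (EuclideanSpace ℝ (Fin N))}
    {u : EuclideanSpace ℝ (Fin N) → ℝ} (h1 : ContDiff ℝ (⊤ : ℕ∞) u)
    (h3 : HasCompactSupport u) (hu : tsupport u ⊆ Ω) :
    lam1 p Ω * (∫ x, |u x| ^ p) ≤ (∫ x, ‖fderiv ℝ u x‖ ^ p) := by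
  by_cases h2 : u = 0
  · have : ∫ x, |u x| ^ p = 0 := by
      simp [h2, Real.zero_rpow (by linarith : p ≠ 0)]
    rw [this, mul_zero]
    positivity
  · have := lam1_le hp h1 h2 h3 hu
    rwa [le_div_iff₀ (mass_pos hp h1.continuous h2 h3)] at this

open ContinuousLinearMap in
lemma lam1_mul_le_lip {N : ℕ} {p : ℝ} (hp : 1 < p) {Ω : Set (EuclideanSpace ℝ (Fin N))}
    (hΩ : IsOpen Ω) {v : EuclideanSpace ℝ (Fin N) → ℝ} {C : NNReal}
    (hv : LipschitzWith C v) (hc : HasCompactSupport v) (hs : tsupport v ⊆ Ω) :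
    lam1 p Ω * (∫ x, |v x| ^ p) ≤ (∫ x, ‖fderiv ℝ v x‖ ^ p) := by
  let φ : ℕ → ContDiffBump (0 : EuclideanSpace ℝ (Fin N)) := fun n =>
    ⟨1 / ((n : ℝ) + 1) / 2, 1 / ((n : ℝ) + 1), by positivity, half_lt_self (by positivity)⟩
  have hr : ∀ n, (φ n).rOut = 1 / ((n : ℝ) + 1) := fun n => rfl
  have hr1 : ∀ n, (φ n).rOut ≤ 1 := fun n => by
    rw [hr, div_le_one (by positivity)]
    linarith [Nat.cast_nonneg (α := ℝ) n]
  let w : ℕ → EuclideanSpace ℝ (Fin N) → ℝ := fun n =>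
    convolution ((φ n).normed volume) v (lsmul ℝ ℝ) volume
  have hws : ∀ n, ContDiff ℝ (⊤ : ℕ∞) (w n) := fun n =>
    (φ n).hasCompactSupport_normed.contDiff_convolution_left _ (φ n).contDiff_normed
      hv.continuous.locallyIntegrable
  have hsupp : ∀ n, tsupport (w n) ⊆ cthickening (φ n).rOut (tsupport v) := by
    intro n
    apply closure_minimal _ isClosed_cthickening
    intro x hx
    have hx' := support_convolution_subset (lsmul ℝ ℝ) hx
    obtain ⟨a, ha, b, hb, rfl⟩ := hx'
    rw [(φ n).support_normed_eq, mem_ball_zero_iff] at ha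
    apply mem_cthickening_of_dist_le _ b _ _ (subset_tsupport _ hb)
    simp only [dist_eq_norm, add_sub_cancel_right]
    exact ha.le
  have hcw : ∀ n, HasCompactSupport (w n) := fun n =>
    hc.isCompact.cthickening.of_isClosed_subset isClosed_closure (hsupp n)
  have hdist : ∀ n x, |w n x - v x| ≤ C * (φ n).rOut := by
    intro n x
    rw [← Real.dist_eq]
    apply (φ n).dist_normed_convolution_le hv.continuous.aestronglyMeasurable
    intro y hy
    refine (hv.dist_le_mul y x).trans ?_
    exact mul_le_mul_of_nonneg_left (le_of_lt hy) C.coe_nonneg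
  have hr0 : Tendsto (fun n => (φ n).rOut) atTop (𝓝 0) := tendsto_one_div_add_atTop_nhds_zero_nat
  have hlim : ∀ x, Tendsto (fun n => w n x) atTop (𝓝 (v x)) := by
    intro x
    rw [tendsto_iff_dist_tendsto_zero]
    refine squeeze_zero (fun _ => dist_nonneg) (fun n => ?_) (?_ : Tendsto (fun n => C * (φ n).rOut) atTop (𝓝 0))
    · rw [Real.dist_eq]; exact hdist n x
    · simpa using hr0.const_mul (C : ℝ)
  obtain ⟨M, hM⟩ := hc.exists_bound_of_continuous hv.continuous
  have hM0 : 0 ≤ M := (norm_nonneg _).trans (hM 0)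
  have hwb : ∀ n x, |w n x| ≤ M + C := by
    intro n x
    have h1 := hdist n x
    have h2 := hM x
    rw [Real.norm_eq_abs] at h2
    have h3 : C * (φ n).rOut ≤ C * 1 := mul_le_mul_of_nonneg_left (hr1 n) C.coe_nonneg
    have h4 := abs_sub_abs_le_abs_sub (w n x) (v x)
    linarith
  have hp0 : 0 ≤ p := by linarith
  have hmass : Tendsto (fun n => ∫ x, |w n x| ^ p) atTop (𝓝 (∫ x, |v x| ^ p)) := by
    apply tendsto_integral_of_dominated_convergence
      (indicator (cthickening 1 (tsupport v)) (fun _ => (M + C) ^ p))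
    · intro n
      exact ((hws n).continuous.abs.rpow_const (fun x => Or.inr hp0)).aestronglyMeasurable
    · rw [integrable_indicator_iff isClosed_cthickening.measurableSet]
      exact integrableOn_const hc.isCompact.cthickening.measure_lt_top.ne
    · intro n
      refine Eventually.of_forall fun x => ?_
      rw [Real.norm_of_nonneg (by positivity)]
      by_cases hx : x ∈ cthickening 1 (tsupport v)
      · rw [indicator_of_mem hx]
        exact Real.rpow_le_rpow (abs_nonneg _) (hwb n x) hp0
      · rw [indicator_of_notMem hx]
        have : w n x = 0 := by
          apply image_eq_zero_of_notMem_tsupport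
          intro h
          exact hx (cthickening_mono (hr1 n) _ (hsupp n h))
        rw [this, abs_zero, Real.zero_rpow (by linarith)]
    · refine Eventually.of_forall fun x => ?_
      exact ((hlim x).abs).rpow_const (Or.inr hp0)
  obtain ⟨δ, hδ, hδs⟩ := hc.isCompact.exists_cthickening_subset_open hΩ hs
  refine le_of_tendsto (hmass.const_mul _) ?_
  filter_upwards [hr0.eventually_lt_const hδ] with n hn
  refine (lam1_mul_le hp (hws n) (hcw n) ?_).trans (mollify_energy hp hv hc (φ n))
  exact (hsupp n).trans ((cthickening_mono hn.le _).trans hδs)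

lemma polar_neg {N : ℕ} (hN : 2 ≤ N) {H : EuclideanSpace ℝ (Fin N) → ℝ} (hH : Integrable H)
    (hneg : ∫ x, H x < 0) : ∃ ω : EuclideanSpace ℝ (Fin N), ‖ω‖ = 1 ∧
      ∫ r in Ioi (0 : ℝ), r ^ (N - 1) * H (r • ω) < 0 := by
  have : Nontrivial (EuclideanSpace ℝ (Fin N)) := by
    have : Nonempty (Fin N) := ⟨⟨0, by omega⟩⟩
    infer_instance
  set μ : Measure (EuclideanSpace ℝ (Fin N)) := volume with hμ
  have hdim : Module.finrank ℝ (EuclideanSpace ℝ (Fin N)) = N := by simp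
  have hmp := μ.measurePreserving_homeomorphUnitSphereProd
  rw [hdim] at hmp
  let G : sphere (0 : EuclideanSpace ℝ (Fin N)) 1 × Ioi (0 : ℝ) → ℝ := fun q => H (q.2.1 • q.1.1)
  have hG : ∀ x : ({0}ᶜ : Set (EuclideanSpace ℝ (Fin N))), G (homeomorphUnitSphereProd _ x) = H x := by
    intro x
    have hx : ‖x.1‖ ≠ 0 := norm_ne_zero_iff.mpr x.2
    simp [G, smul_smul, hx]
  have e1 : ∫ x, H x = ∫ q, G q ∂(μ.toSphere.prod (.volumeIoiPow (N - 1))) := by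
    rw [← hmp.integral_comp (Homeomorph.measurableEmbedding _)]
    simp only [hG]
    rw [integral_subtype_comap (measurableSet_singleton _).compl (fun x => H x),
      restrict_compl_singleton]
  have hi : Integrable G (μ.toSphere.prod (.volumeIoiPow (N - 1))) := by
    rw [← hmp.integrable_comp_emb (Homeomorph.measurableEmbedding _)]
    have : G ∘ (homeomorphUnitSphereProd (EuclideanSpace ℝ (Fin N))) = H ∘ (Subtype.val) := funext hG
    rw [this, ← integrableOn_iff_comap_subtypeVal (measurableSet_singleton _).compl]
    exact hH.integrableOn
  rw [e1, integral_prod _ hi] at hneg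
  obtain ⟨ω, hω⟩ : ∃ ω, ∫ r, G (ω, r) ∂(Measure.volumeIoiPow (N - 1)) < 0 := by
    by_contra! h
    exact absurd (integral_nonneg h) (not_le.mpr hneg)
  refine ⟨ω.1, by simp, ?_⟩
  convert hω using 1
  simp only [Measure.volumeIoiPow, ENNReal.ofReal]
  rw [integral_withDensity_eq_integral_smul]
  · rw [integral_subtype_comap measurableSet_Ioi (fun a => Real.toNNReal (a ^ (N - 1)) • H (a • ω.1))]
    refine setIntegral_congr_fun measurableSet_Ioi fun x hx => ?_
    rw [NNReal.smul_def, Real.coe_toNNReal _ (pow_nonneg hx.out.le _), smul_eq_mul]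
  · exact (measurable_subtype_coe.pow_const _).real_toNNReal

lemma radial_int {N : ℕ} (hN : 2 ≤ N) (g : ℝ → ℝ) :
    ∫ x : EuclideanSpace ℝ (Fin N), g ‖x‖ =
      (N * volume.real (ball (0 : EuclideanSpace ℝ (Fin N)) 1)) *
        ∫ y in Ioi (0 : ℝ), y ^ (N - 1) * g y := by
  have : Nontrivial (EuclideanSpace ℝ (Fin N)) := by
    have : Nonempty (Fin N) := ⟨⟨0, by omega⟩⟩
    infer_instance
  rw [integral_fun_norm_addHaar]
  simp [mul_assoc]

lemma sphere_const_pos {N : ℕ} (hN : 2 ≤ N) :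
    0 < (N * volume.real (ball (0 : EuclideanSpace ℝ (Fin N)) 1)) := by
  have : 0 < N := by omega
  have h2 : 0 < volume.real (ball (0 : EuclideanSpace ℝ (Fin N)) 1) := by
    rw [measureReal_def, ENNReal.toReal_pos_iff]
    exact ⟨measure_ball_pos _ _ one_pos, measure_ball_lt_top⟩
  positivity

/-- A normalized radial profile. -/
structure Prof (N : ℕ) (p R R₁ Q : ℝ) (f : ℝ → ℝ) (t η : ℝ) : Prop where
  smooth : ContDiff ℝ 1 f
  ht : R < t
  ht1 : t < R₁
  ft : f t = 1
  dft : deriv f t = 0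
  le1 : ∀ r, 0 ≤ r → |f r| ≤ 1
  η0 : 0 < η
  zl : ∀ r, 0 ≤ r → r ≤ R + η → f r = 0
  zr : ∀ r, R₁ - η ≤ r → f r = 0
  en : ∫ x : EuclideanSpace ℝ (Fin N), |deriv f ‖x‖| ^ p <
    Q * ∫ x : EuclideanSpace ℝ (Fin N), |f ‖x‖| ^ p

lemma exists_prof {N : ℕ} (hN : 2 ≤ N) {p : ℝ} (hp : 1 < p) {R R₁ Q : ℝ} (hR : 0 < R)
    (hRR : R < R₁) {u : EuclideanSpace ℝ (Fin N) → ℝ}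
    (h1 : ContDiff ℝ (⊤ : ℕ∞) u) (h3 : HasCompactSupport u)
    (hu : tsupport u ⊆ ball 0 R₁ \ closedBall 0 R)
    (hQ : ∫ x, ‖fderiv ℝ u x‖ ^ p < Q * ∫ x, |u x| ^ p) :
    ∃ f t η, Prof N p R R₁ Q f t η := by
  have hp0 : 0 ≤ p := by linarith
  -- uniform margin
  obtain ⟨η, hη, hηs⟩ : ∃ η > 0, ∀ x, u x ≠ 0 → R + η < ‖x‖ ∧ ‖x‖ < R₁ - η := by
    obtain ⟨δ, hδ, hδs⟩ := h3.isCompact.exists_cthickening_subset_open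
      (isOpen_ball.sdiff isClosed_closedBall) hu
    refine ⟨δ / 2, by positivity, fun x hx => ?_⟩
    have hxs : x ∈ tsupport u := subset_tsupport _ hx
    have hxA := hu hxs
    simp only [Set.mem_sdiff, mem_ball_zero_iff, mem_closedBall_zero_iff, not_le] at hxA
    have hx0 : 0 < ‖x‖ := hR.trans hxA.2
    have hA : ∀ a : ℝ, |a| ≤ δ → R < |‖x‖ + a| ∧ |‖x‖ + a| < R₁ := by
      intro a ha
      have hy : ((‖x‖ + a) / ‖x‖) • x ∈ cthickening δ (tsupport u) := by
        apply mem_cthickening_of_dist_le _ x _ _ hxs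
        rw [dist_eq_norm]
        have : ((‖x‖ + a) / ‖x‖) • x - x = (a / ‖x‖) • x := by
          rw [add_div, div_self hx0.ne', add_smul, one_smul, add_sub_cancel_left]
        rw [this, norm_smul, norm_div, norm_norm, div_mul_cancel₀ _ hx0.ne']
        exact ha
      have := hδs hy
      simp only [Set.mem_sdiff, mem_ball_zero_iff, mem_closedBall_zero_iff, not_le, norm_smul, norm_div,
        abs_norm, div_mul_cancel₀ _ hx0.ne', Real.norm_eq_abs] at this
      exact ⟨this.2, this.1⟩
    constructor
    · by_contra! hc
      have h := (hA (-(‖x‖ - R)) (by rw [abs_neg, abs_of_pos (by linarith)]; linarith)).1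
      rw [show ‖x‖ + -(‖x‖ - R) = R by ring, abs_of_pos hR] at h
      exact lt_irrefl _ h
    · by_contra! hc
      have h := (hA (R₁ - ‖x‖) (by rw [abs_of_pos (by linarith)]; linarith)).2
      rw [show ‖x‖ + (R₁ - ‖x‖) = R₁ by ring, abs_of_pos (by linarith)] at h
      exact lt_irrefl _ h
  have hE := energy_integrable hp h1 h3
  have hM := mass_integrable hp h1.continuous h3
  obtain ⟨ω, hω, hneg⟩ := polar_neg hN (H := fun x => ‖fderiv ℝ u x‖ ^ p - Q * |u x| ^ p)
    (hE.sub (hM.const_mul Q)) (by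
      rw [integral_sub hE (hM.const_mul Q), integral_const_mul]; linarith)
  let f : ℝ → ℝ := fun r => u (r • ω)
  have hnr : ∀ r : ℝ, 0 ≤ r → ‖r • ω‖ = r := fun r hr => by
    rw [norm_smul, hω, mul_one, Real.norm_of_nonneg hr]
  have hfs : ContDiff ℝ 1 f := by
    have : ContDiff ℝ 1 u := h1.of_le (by exact_mod_cast le_top)
    exact this.comp (contDiff_id.smul contDiff_const)
  have hfzl : ∀ r, 0 ≤ r → r ≤ R + η → f r = 0 := by
    intro r hr hr'
    by_contra hc
    have := (hηs _ hc).1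
    rw [hnr r hr] at this
    linarith
  have hfzr : ∀ r, R₁ - η ≤ r → f r = 0 := by
    intro r hr
    by_contra hc
    have := hηs _ hc
    have h2 : ‖r • ω‖ = |r| := by rw [norm_smul, hω, mul_one, Real.norm_eq_abs]
    rw [h2] at this
    linarith [le_abs_self r]
  have hder : ∀ r, |deriv f r| ≤ ‖fderiv ℝ u (r • ω)‖ := by
    intro r
    have hd : HasDerivAt f (fderiv ℝ u (r • ω) ω) r := by
      have hd1 := (h1.differentiable (by simp) (r • ω)).hasFDerivAt
      have hd2 : HasDerivAt (fun r : ℝ => r • ω) ω r := by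
        simpa using (hasDerivAt_id r).smul_const ω
      exact hd1.comp_hasDerivAt r hd2
    rw [hd.deriv, ← Real.norm_eq_abs]
    simpa [hω] using (fderiv ℝ u (r • ω)).le_opNorm ω
  -- one-dimensional integrability
  have hcint : ∀ g : ℝ → ℝ, Continuous g → (∀ r, R₁ < r → g r = 0) →
      IntegrableOn (fun r => r ^ (N - 1) * g r) (Ioi 0) := by
    intro g hg hg0
    have h5 : IntegrableOn (fun r => r ^ (N - 1) * g r) (Icc 0 R₁) :=
      (by fun_prop : Continuous (fun r => r ^ (N - 1) * g r)).continuousOn.integrableOn_Icc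
    have h6 : IntegrableOn (fun r => r ^ (N - 1) * g r) (Ioi R₁) := by
      apply IntegrableOn.congr_fun (integrableOn_zero) _ measurableSet_Ioi
      intro r hr
      simp [hg0 r hr]
    apply (h5.union h6).mono_set
    intro r hr
    rcases le_or_gt r R₁ with h | h
    · exact Or.inl ⟨le_of_lt hr, h⟩
    · exact Or.inr h
  have hu0 : ∀ r, R₁ < r → r • ω ∉ tsupport u := by
    intro r hr hc
    have := (hu hc).1
    rw [mem_ball_zero_iff, hnr r (by linarith)] at this
    linarith
  have hcont : Continuous (fun r : ℝ => r • ω) := by fun_prop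
  have i1 := hcint (fun r => ‖fderiv ℝ u (r • ω)‖ ^ p)
    (((h1.continuous_fderiv (by simp)).comp hcont).norm.rpow_const (fun _ => Or.inr hp0))
    (fun r hr => by rw [fderiv_zero_off (hu0 r hr), norm_zero, Real.zero_rpow (by linarith)])
  have i2 := hcint (fun r => |f r| ^ p) (hfs.continuous.abs.rpow_const (fun _ => Or.inr hp0))
    (fun r hr => by rw [hfzr r (by linarith), abs_zero, Real.zero_rpow (by linarith)])
  have hen : ∫ r in Ioi (0:ℝ), r ^ (N - 1) * |deriv f r| ^ p <
      Q * ∫ r in Ioi (0:ℝ), r ^ (N - 1) * |f r| ^ p := by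
    have h7 : ∫ r in Ioi (0:ℝ), r ^ (N - 1) * |deriv f r| ^ p ≤
        ∫ r in Ioi (0:ℝ), r ^ (N - 1) * ‖fderiv ℝ u (r • ω)‖ ^ p := by
      apply integral_mono_of_nonneg
      · filter_upwards [ae_restrict_mem measurableSet_Ioi] with r hr
        have : 0 ≤ r := le_of_lt hr
        simp only [Pi.zero_apply]; positivity
      · exact i1
      · filter_upwards [ae_restrict_mem measurableSet_Ioi] with r hr
        have : 0 ≤ r := le_of_lt hr
        exact mul_le_mul_of_nonneg_left (Real.rpow_le_rpow (abs_nonneg _) (hder r) hp0) (by positivity)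
    have h8 : ∫ r in Ioi (0:ℝ), r ^ (N - 1) * (‖fderiv ℝ u (r • ω)‖ ^ p - Q * |u (r • ω)| ^ p) =
        (∫ r in Ioi (0:ℝ), r ^ (N - 1) * ‖fderiv ℝ u (r • ω)‖ ^ p) -
          Q * ∫ r in Ioi (0:ℝ), r ^ (N - 1) * |f r| ^ p := by
      rw [← integral_const_mul, ← integral_sub i1 (i2.const_mul Q)]
      congr 1; ext r; simp only [f]; ring
    rw [h8] at hneg
    linarith
  -- maximum
  obtain ⟨t, htI, htm⟩ := (isCompact_Icc (a := (0:ℝ)) (b := R₁)).exists_isMaxOn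
    (nonempty_Icc.mpr (by linarith)) hfs.continuous.abs.continuousOn
  have hmax : ∀ r, 0 ≤ r → |f r| ≤ |f t| := by
    intro r hr
    rcases le_or_gt r R₁ with h | h
    · exact htm ⟨hr, h⟩
    · rw [hfzr r (by linarith), abs_zero]; positivity
  have hft : f t ≠ 0 := by
    intro hc
    have hz : ∀ r, 0 ≤ r → f r = 0 := fun r hr => by
      have := hmax r hr
      rw [hc, abs_zero] at this
      exact abs_nonpos_iff.mp this
    have h9 : ∫ r in Ioi (0:ℝ), r ^ (N - 1) * |f r| ^ p = 0 := by
      apply setIntegral_eq_zero_of_forall_eq_zero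
      intro r hr
      rw [hz r (le_of_lt hr), abs_zero, Real.zero_rpow (by linarith), mul_zero]
    rw [h9, mul_zero] at hen
    refine absurd hen (not_lt.mpr (setIntegral_nonneg measurableSet_Ioi fun r hr => ?_))
    have : 0 ≤ r := le_of_lt hr
    positivity
  have htR : R < t := by
    by_contra! hc
    exact hft (hfzl t htI.1 (by linarith))
  have htR1 : t < R₁ := by
    by_contra! hc
    exact hft (hfzr t (by linarith))
  set F : ℝ → ℝ := fun r => (f t)⁻¹ * f r with hF
  have hFabs : ∀ r, |F r| = |f t|⁻¹ * |f r| := fun r => by simp [hF, abs_mul]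
  have hFd : ∀ r, deriv F r = (f t)⁻¹ * deriv f r := fun r => by
    simp only [hF]
    exact deriv_const_mul_field _
  have hF1 : ∀ r, 0 ≤ r → |F r| ≤ 1 := fun r hr => by
    rw [hFabs, inv_mul_le_iff₀ (abs_pos.mpr hft), mul_one]
    exact hmax r hr
  have hFt : F t = 1 := by simp [hF, hft]
  refine ⟨F, t, η, ⟨contDiff_const.mul hfs, htR, htR1, hFt, ?_, hF1, hη, ?_, ?_, ?_⟩⟩
  · apply IsLocalMax.deriv_eq_zero
    filter_upwards [lt_mem_nhds (hR.trans htR)] with r hr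
    rw [hFt]
    exact (le_abs_self _).trans (hF1 r hr.le)
  · intro r hr hr'
    simp [hF, hfzl r hr hr']
  · intro r hr
    simp [hF, hfzr r hr]
  · rw [radial_int hN (fun r => |deriv F r| ^ p), radial_int hN (fun r => |F r| ^ p)]
    have hk : 0 < (|f t|⁻¹) ^ p := by
      have := abs_pos.mpr hft
      positivity
    have e2 : ∫ r in Ioi (0:ℝ), r ^ (N - 1) * |deriv F r| ^ p =
        (|f t|⁻¹) ^ p * ∫ r in Ioi (0:ℝ), r ^ (N - 1) * |deriv f r| ^ p := by
      rw [← integral_const_mul]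
      congr 1; ext r
      rw [hFd, abs_mul, abs_inv, Real.mul_rpow (by positivity) (by positivity)]
      ring
    have e3 : ∫ r in Ioi (0:ℝ), r ^ (N - 1) * |F r| ^ p =
        (|f t|⁻¹) ^ p * ∫ r in Ioi (0:ℝ), r ^ (N - 1) * |f r| ^ p := by
      rw [← integral_const_mul]
      congr 1; ext r
      rw [hFabs, Real.mul_rpow (by positivity) (by positivity)]
      ring
    rw [e2, e3]
    have hs := sphere_const_pos hN
    have := mul_lt_mul_of_pos_left (mul_lt_mul_of_pos_left hen hk) hs
    calc _ < _ := this
      _ = _ := by ring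

lemma young_simple {p : ℝ} (hp : 1 < p) {ε y : ℝ} (hε : 0 < ε) (hy : 0 ≤ y) :
    y ≤ ε * y ^ p + ε ^ (-(1 / (p - 1))) := by
  set c := ε ^ (-(1 / (p - 1))) with hc
  have hc0 : 0 < c := Real.rpow_pos_of_pos hε _
  rcases le_or_gt y c with h | h
  · have : 0 ≤ ε * y ^ p := by positivity
    linarith
  · have hy0 : 0 < y := hc0.trans h
    have h1 : c ^ (p - 1) ≤ y ^ (p - 1) := Real.rpow_le_rpow hc0.le h.le (by linarith)
    have h2 : c ^ (p - 1) = ε⁻¹ := by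
      rw [hc, ← Real.rpow_mul hε.le]
      have : -(1 / (p - 1)) * (p - 1) = -1 := by
        have : p - 1 ≠ 0 := by linarith
        field_simp
      rw [this, Real.rpow_neg_one]
    have h3 : y ^ p = y ^ (p - 1) * y := by
      rw [← Real.rpow_add_one hy0.ne']; congr 1; ring
    have h4 : 1 ≤ ε * y ^ (p - 1) := by
      rw [h2] at h1
      calc (1 : ℝ) = ε * ε⁻¹ := (mul_inv_cancel₀ hε.ne').symm
        _ ≤ _ := mul_le_mul_of_nonneg_left h1 hε.le
    calc y = 1 * y := (one_mul y).symm
      _ ≤ (ε * y ^ (p - 1)) * y := mul_le_mul_of_nonneg_right h4 hy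
      _ = ε * y ^ p := by rw [h3]; ring
      _ ≤ _ := by linarith

lemma Prof.deriv_zero {N : ℕ} {p R R₁ Q : ℝ} {f : ℝ → ℝ} {t η : ℝ}
    (h : Prof N p R R₁ Q f t η) {r : ℝ} (hr : R₁ ≤ r) : deriv f r = 0 := by
  have h0 := h.η0
  have : f =ᶠ[𝓝 r] fun _ => 0 := by
    filter_upwards [lt_mem_nhds (show R₁ - η < r by linarith)] with s hs
    exact h.zr s hs.le
  rw [this.deriv_eq]
  simp

lemma Prof.osc {N : ℕ} (hN : 2 ≤ N) {p R R₁ Q : ℝ} (hp : 1 < p) (hR : 0 < R) {f : ℝ → ℝ} {t η : ℝ}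
    (h : Prof N p R R₁ Q f t η) {ε : ℝ} (hε : 0 < ε) {a b : ℝ} (ha : R ≤ a) (hab : a ≤ b) 
    (hb : b ≤ R₁) :
    |f b - f a| ≤ ε * ((∫ x : EuclideanSpace ℝ (Fin N), |deriv f ‖x‖| ^ p) /
      (N * volume.real (ball (0 : EuclideanSpace ℝ (Fin N)) 1) * R ^ (N - 1))) +
      ε ^ (-(1 / (p - 1))) * (b - a) := by
  have hp0 : 0 ≤ p := by linarith
  have hκ := sphere_const_pos hN
  set κ := (N * volume.real (ball (0 : EuclideanSpace ℝ (Fin N)) 1)) with hκd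
  have hdc : Continuous (deriv f) := h.smooth.continuous_deriv le_rfl
  have hgc : Continuous (fun r => |deriv f r| ^ p) := hdc.abs.rpow_const (fun _ => Or.inr hp0)
  rw [radial_int hN (fun r => |deriv f r| ^ p), ← hκd, mul_div_mul_left _ _ hκ.ne']
  have hInt : IntegrableOn (fun r => r ^ (N - 1) * |deriv f r| ^ p) (Ioi 0) := by
    have h5 : IntegrableOn (fun r => r ^ (N - 1) * |deriv f r| ^ p) (Icc 0 R₁) :=
      (by fun_prop : Continuous (fun r => r ^ (N - 1) * |deriv f r| ^ p)).continuousOn.integrableOn_Icc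
    have h6 : IntegrableOn (fun r => r ^ (N - 1) * |deriv f r| ^ p) (Ioi R₁) := by
      apply IntegrableOn.congr_fun (integrableOn_zero) _ measurableSet_Ioi
      intro r hr
      simp [h.deriv_zero (le_of_lt hr), Real.zero_rpow (by linarith : p ≠ 0)]
    apply (h5.union h6).mono_set
    intro r hr
    rcases le_or_gt r R₁ with h | h
    · exact Or.inl ⟨le_of_lt hr, h⟩
    · exact Or.inr h
  have h1 : R ^ (N - 1) * ∫ r in a..b, |deriv f r| ^ p ≤
      ∫ r in Ioi (0:ℝ), r ^ (N - 1) * |deriv f r| ^ p := by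
    rw [intervalIntegral.integral_of_le hab, ← integral_const_mul]
    calc _ ≤ ∫ r in Ioc a b, r ^ (N - 1) * |deriv f r| ^ p := by
          apply setIntegral_mono_on
          · exact (by fun_prop : Continuous (fun r => R ^ (N - 1) * |deriv f r| ^ p)).integrableOn_Ioc
          · exact (by fun_prop : Continuous (fun r => r ^ (N - 1) * |deriv f r| ^ p)).integrableOn_Ioc
          · exact measurableSet_Ioc
          · intro r hr
            have hRr : R ≤ r := by linarith [hr.1]
            gcongr
      _ ≤ _ := by
          apply setIntegral_mono_set hInt
          · filter_upwards [ae_restrict_mem measurableSet_Ioi] with r hr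
            have : 0 ≤ r := le_of_lt hr
            simp only [Pi.zero_apply]; positivity
          · apply LE.le.eventuallyLE
            intro r hr
            exact lt_of_lt_of_le hR (by linarith [hr.1])
  have h2 : f b - f a = ∫ r in a..b, deriv f r := by
    rw [intervalIntegral.integral_deriv_eq_sub]
    · intro r _; exact h.smooth.differentiable one_ne_zero r
    · exact hdc.intervalIntegrable _ _
  have h3 : |f b - f a| ≤ ∫ r in a..b, |deriv f r| := by
    rw [h2]
    exact intervalIntegral.abs_integral_le_integral_abs hab
  have h4 : ∫ r in a..b, |deriv f r| ≤
      ∫ r in a..b, (ε * |deriv f r| ^ p + ε ^ (-(1 / (p - 1)))) := by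
    apply intervalIntegral.integral_mono_on hab
    · exact hdc.abs.intervalIntegrable _ _
    · exact (by fun_prop : Continuous (fun r => ε * |deriv f r| ^ p + ε ^ (-(1 / (p - 1))))).intervalIntegrable _ _
    · intro r _
      exact young_simple hp hε (abs_nonneg _)
  rw [intervalIntegral.integral_add (by apply Continuous.intervalIntegrable; fun_prop) (by simp),
    intervalIntegral.integral_const_mul, intervalIntegral.integral_const, smul_eq_mul] at h4
  have h6 : ∫ r in a..b, |deriv f r| ^ p ≤
      (∫ r in Ioi (0:ℝ), r ^ (N - 1) * |deriv f r| ^ p) / R ^ (N - 1) := by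
    rw [le_div_iff₀ (by positivity)]; linarith
  have h7 := mul_le_mul_of_nonneg_left h6 hε.le
  linarith

lemma Prof.mass_le {N : ℕ} {p R R₁ Q : ℝ} (hp : 1 < p) {f : ℝ → ℝ} {t η : ℝ}
    (h : Prof N p R R₁ Q f t η) : ∫ x : EuclideanSpace ℝ (Fin N), |f ‖x‖| ^ p ≤
      volume.real (closedBall (0 : EuclideanSpace ℝ (Fin N)) R₁) := by
  have h0 := h.η0
  rw [← integral_indicator_one isClosed_closedBall.measurableSet]
  apply integral_mono_of_nonneg
  · exact Eventually.of_forall fun x => by positivity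
  · rw [integrable_indicator_iff isClosed_closedBall.measurableSet]
    exact integrableOn_const measure_closedBall_lt_top.ne
  · refine Eventually.of_forall fun x => ?_
    by_cases hx : x ∈ closedBall (0 : EuclideanSpace ℝ (Fin N)) R₁
    · rw [indicator_of_mem hx]
      exact Real.rpow_le_one (abs_nonneg _) (h.le1 _ (norm_nonneg _)) (by linarith)
    · rw [indicator_of_notMem hx]
      rw [mem_closedBall_zero_iff, not_le] at hx
      simp only
      rw [h.zr _ (by linarith), abs_zero, Real.zero_rpow (by linarith)]

lemma ballvol_pos {N : ℕ} {r : ℝ} (hr : 0 < r) :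
    0 < volume.real (closedBall (0 : EuclideanSpace ℝ (Fin N)) r) := by
  rw [measureReal_def, ENNReal.toReal_pos_iff]
  exact ⟨measure_closedBall_pos _ _ hr, measure_closedBall_lt_top⟩

lemma prof_lower {N : ℕ} (hN : 2 ≤ N) {p R R₁ : ℝ} (hp : 1 < p) (hR : 0 < R) (hRR : R < R₁) :
    ∃ l > 0, ∀ Q f t η, Prof N p R R₁ Q f t η → l ≤ Q := by
  have hκ := sphere_const_pos hN
  have hV := ballvol_pos (N := N) (hR.trans hRR)
  set κ := (N * volume.real (ball (0 : EuclideanSpace ℝ (Fin N)) 1)) with hκd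
  set V := volume.real (closedBall (0 : EuclideanSpace ℝ (Fin N)) R₁) with hVd
  set ε := (2 * (R₁ - R)) ^ (p - 1) with hεd
  have hd : 0 < 2 * (R₁ - R) := by linarith
  have hε : 0 < ε := Real.rpow_pos_of_pos hd _
  have hC : ε ^ (-(1 / (p - 1))) = (2 * (R₁ - R))⁻¹ := by
    rw [hεd, ← Real.rpow_mul hd.le]
    have : (p - 1) * -(1 / (p - 1)) = -1 := by
      have : p - 1 ≠ 0 := by linarith
      field_simp
    rw [this, Real.rpow_neg_one]
  refine ⟨κ * R ^ (N - 1) / (2 * ε) / V, by positivity, ?_⟩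
  intro Q f t η h
  have h1 := h.osc hN hp hR hε le_rfl h.ht.le h.ht1.le
  rw [h.ft, h.zl R hR.le (by linarith [h.η0]), hC, sub_zero, abs_one, ← hκd] at h1
  set E := ∫ x : EuclideanSpace ℝ (Fin N), |deriv f ‖x‖| ^ p with hE
  have h2 : (2 * (R₁ - R))⁻¹ * (t - R) ≤ 1 / 2 := by
    rw [inv_mul_le_iff₀ hd]; linarith [h.ht1]
  have h3 : κ * R ^ (N - 1) / (2 * ε) ≤ E := by
    have h4 : 1 / 2 ≤ ε * (E / (κ * R ^ (N - 1))) := by linarith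
    have h5 : 0 < κ * R ^ (N - 1) := by positivity
    rw [div_le_iff₀ (by positivity)]
    rw [← mul_div_assoc, le_div_iff₀ h5] at h4
    linarith
  have h6 := h.en
  have h7 := h.mass_le hp
  have h8 : 0 < E := lt_of_lt_of_le (by positivity) h3
  have h9 : 0 < Q := by
    by_contra! hc
    have : Q * ∫ x : EuclideanSpace ℝ (Fin N), |f ‖x‖| ^ p ≤ 0 :=
      mul_nonpos_of_nonpos_of_nonneg hc (by positivity)
    linarith
  rw [div_le_iff₀ hV]
  have := mul_le_mul_of_nonneg_left h7 h9.le
  linarith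

lemma prof_small {N : ℕ} (hN : 2 ≤ N) {p R R₁ : ℝ} (hp : 1 < p) (hR : 0 < R) (hRR : R < R₁)
    (Q₀ : ℝ) (hQ₀ : 0 ≤ Q₀) :
    ∃ d > 0, d ≤ (R₁ - R) / 2 ∧ ∀ Q f t η, Prof N p R R₁ Q f t η → Q ≤ Q₀ →
      (∀ r, 0 ≤ r → r ≤ R + d → |f r| ≤ 1 / 2) ∧ (∀ r, R₁ - d ≤ r → |f r| ≤ 1 / 2) := by
  have hκ := sphere_const_pos hN
  have hV := ballvol_pos (N := N) (hR.trans hRR)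
  set κ := (N * volume.real (ball (0 : EuclideanSpace ℝ (Fin N)) 1)) with hκd
  set V := volume.real (closedBall (0 : EuclideanSpace ℝ (Fin N)) R₁) with hVd
  set J := Q₀ * V / (κ * R ^ (N - 1)) + 1 with hJ
  have hJ0 : 0 < J := by positivity
  set ε := 1 / (4 * J) with hεd
  have hε : 0 < ε := by positivity
  set C := ε ^ (-(1 / (p - 1))) with hCd
  have hC : 0 < C := Real.rpow_pos_of_pos hε _
  have hmain : ∀ Q f t η, Prof N p R R₁ Q f t η → Q ≤ Q₀ → ∀ a b, R ≤ a → a ≤ b → b ≤ R₁ →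
      b - a ≤ 1 / (4 * C) → |f b - f a| ≤ 1 / 2 := by
    intro Q f t η h hQ a b ha hab hb hd
    have h1 := h.osc hN hp hR hε ha hab hb
    rw [← hκd, ← hCd] at h1
    have h2 : (∫ x : EuclideanSpace ℝ (Fin N), |deriv f ‖x‖| ^ p) / (κ * R ^ (N - 1)) ≤ J := by
      have h3 := h.en
      have h4 := h.mass_le hp
      have h5 : Q * ∫ x : EuclideanSpace ℝ (Fin N), |f ‖x‖| ^ p ≤ Q₀ * V :=
        mul_le_mul hQ h4 (by positivity) hQ₀
      have h6 : (∫ x : EuclideanSpace ℝ (Fin N), |deriv f ‖x‖| ^ p) / (κ * R ^ (N - 1)) ≤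
          Q₀ * V / (κ * R ^ (N - 1)) := by
        gcongr
        linarith
      linarith
    have h7 := mul_le_mul_of_nonneg_left h2 hε.le
    have h8 := mul_le_mul_of_nonneg_left hd hC.le
    have h9 : ε * J = 1 / 4 := by rw [hεd]; field_simp
    have h10 : C * (1 / (4 * C)) = 1 / 4 := by field_simp
    linarith
  refine ⟨min ((R₁ - R) / 2) (1 / (4 * C)), lt_min (by linarith) (by positivity), min_le_left _ _, ?_⟩
  intro Q f t η h hQ
  have hd1 := min_le_left ((R₁ - R) / 2) (1 / (4 * C))
  have hd2 := min_le_right ((R₁ - R) / 2) (1 / (4 * C))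
  have hη := h.η0
  constructor
  · intro r hr hr'
    rcases le_or_gt r R with hrR | hrR
    · rw [h.zl r hr (by linarith)]; norm_num
    · have := hmain Q f t η h hQ R r le_rfl hrR.le (by linarith) (by linarith)
      rwa [h.zl R hR.le (by linarith), sub_zero] at this
  · intro r hr
    rcases le_or_gt R₁ r with hrR | hrR
    · rw [h.zr r (by linarith)]; norm_num
    · have := hmain Q f t η h hQ r R₁ (by linarith) hrR.le le_rfl (by linarith)
      rwa [h.zr R₁ (by linarith), zero_sub, abs_neg] at this

lemma integrable_of_zero_far {N : ℕ} {g : EuclideanSpace ℝ (Fin N) → ℝ} (hg : Continuous g)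
    {c : EuclideanSpace ℝ (Fin N)} {ρ : ℝ} (h0 : ∀ x, ρ < ‖x - c‖ → g x = 0) : Integrable g := by
  apply hg.integrable_of_hasCompactSupport
  apply HasCompactSupport.intro (isCompact_closedBall c ρ)
  intro x hx
  rw [mem_closedBall, not_le, dist_eq_norm] at hx
  exact h0 x hx

lemma eventually_lip {f : ℝ → ℝ} (hf : ContDiff ℝ 1 f) (r : ℝ) {K : ℝ} (hK : |deriv f r| < K) :
    ∀ᶠ s in 𝓝 r, |f s - f r| ≤ K * |s - r| := by
  have hK0 : 0 ≤ K := (abs_nonneg _).trans hK.le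
  lift K to NNReal using hK0
  have hs : HasStrictFDerivAt f (fderiv ℝ f r) r := hf.contDiffAt.hasStrictFDerivAt one_ne_zero
  obtain ⟨s, hs, hl⟩ := hs.exists_lipschitzOnWith_of_nnnorm_lt K (by
    rw [← NNReal.coe_lt_coe, coe_nnnorm, ← norm_deriv_eq_norm_fderiv]
    exact hK)
  filter_upwards [hs] with y hy
  have := hl.dist_le_mul y hy r (mem_of_mem_nhds hs)
  rwa [Real.dist_eq, Real.dist_eq] at this

lemma lam1_nonneg {N : ℕ} (p : ℝ) (Ω : Set (EuclideanSpace ℝ (Fin N))) : 0 ≤ lam1 p Ω := by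
  apply Real.sInf_nonneg
  rintro r ⟨w, -, -, -, -, rfl⟩
  apply div_nonneg
  · exact integral_nonneg fun x => by positivity
  · exact integral_nonneg fun x => by positivity

set_option maxHeartbeats 1000000 in
lemma lam1_competitor {N : ℕ} {p R R₁ Q : ℝ} (hp : 1 < p) (hR : 0 < R) (hRR : R < R₁)
    {f : ℝ → ℝ} {t η d : ℝ} (h : Prof N p R R₁ Q f t η) (hd : 0 < d) (hd1 : d ≤ (R₁ - R) / 2)
    (hsm : (∀ r, 0 ≤ r → r ≤ R + d → |f r| ≤ 1 / 2) ∧ (∀ r, R₁ - d ≤ r → |f r| ≤ 1 / 2))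
    {e : EuclideanSpace ℝ (Fin N)} (he : ‖e‖ = 1) :
    lam1 p (ball 0 R₁ \ closedBall ((R₁ - R - d) • e) R) *
      ((∫ x : EuclideanSpace ℝ (Fin N), |f ‖x‖| ^ p) +
        (1 - (1 / 2) ^ p) * volume.real (ball ((R₁ - d / 2) • e) (d / 2))) ≤
    ∫ x : EuclideanSpace ℝ (Fin N), |deriv f ‖x‖| ^ p := by
  have hp0 : 0 ≤ p := by linarith
  have hη := h.η0
  have ht := h.ht
  have ht1 := h.ht1
  have ht0 : 0 < t := hR.trans ht
  set c := (R₁ - R - d) • e with hc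
  have hfc := h.smooth.continuous
  have hdc : Continuous (deriv f) := h.smooth.continuous_deriv le_rfl
  have hz : (0:ℝ) ^ p = 0 := Real.zero_rpow (by linarith)
  have hrp : Continuous (fun y : ℝ => y ^ p) := Real.continuous_rpow_const hp0
  -- Lipschitz bound
  obtain ⟨M, hM⟩ : ∃ M : NNReal, LipschitzOnWith M f (Ici 0) := by
    obtain ⟨M, hM⟩ := (isCompact_Icc (a := (0:ℝ)) (b := R₁)).exists_bound_of_continuousOn
      hdc.continuousOn
    refine ⟨M.toNNReal, Convex.lipschitzOnWith_of_nnnorm_deriv_le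
      (fun x _ => h.smooth.differentiable one_ne_zero x) (fun x hx => ?_) (convex_Ici 0)⟩
    rw [← NNReal.coe_le_coe, coe_nnnorm]
    rcases le_or_gt x R₁ with hx1 | hx1
    · exact (hM x ⟨hx, hx1⟩).trans (Real.le_coe_toNNReal M)
    · rw [h.deriv_zero hx1.le, norm_zero]; positivity
  let a : EuclideanSpace ℝ (Fin N) → ℝ := fun x => |f (max ‖x‖ t)|
  let b : EuclideanSpace ℝ (Fin N) → ℝ := fun x => |f (min ‖x - c‖ t)|
  let v : EuclideanSpace ℝ (Fin N) → ℝ := fun x => min (a x) (b x)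
  have hmx : ∀ x y : EuclideanSpace ℝ (Fin N), |max ‖x‖ t - max ‖y‖ t| ≤ ‖x - y‖ := fun x y => by
    refine (abs_max_sub_max_le_max _ _ _ _).trans ?_
    rw [sub_self, abs_zero, max_eq_left (abs_nonneg _)]
    exact abs_norm_sub_norm_le x y
  have hmn : ∀ x y : EuclideanSpace ℝ (Fin N),
      |min ‖x - c‖ t - min ‖y - c‖ t| ≤ ‖x - y‖ := fun x y => by
    refine (abs_min_sub_min_le_max _ _ _ _).trans ?_
    rw [sub_self, abs_zero, max_eq_left (abs_nonneg _)]
    simpa using abs_norm_sub_norm_le (x - c) (y - c)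
  have hx0 : ∀ x : EuclideanSpace ℝ (Fin N), 0 ≤ max ‖x‖ t := fun x => le_max_of_le_left (norm_nonneg _)
  have hn0 : ∀ x : EuclideanSpace ℝ (Fin N), 0 ≤ min ‖x‖ t := fun x => le_min (norm_nonneg _) ht0.le
  have hv : LipschitzWith M v := by
    apply LipschitzWith.of_dist_le_mul
    intro x y
    rw [Real.dist_eq, dist_eq_norm]
    refine (abs_min_sub_min_le_max _ _ _ _).trans (max_le ?_ ?_)
    · refine (abs_abs_sub_abs_le_abs_sub _ _).trans ?_
      have := hM.dist_le_mul _ (hx0 x) _ (hx0 y)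
      rw [Real.dist_eq, Real.dist_eq] at this
      exact this.trans (mul_le_mul_of_nonneg_left (hmx x y) M.coe_nonneg)
    · refine (abs_abs_sub_abs_le_abs_sub _ _).trans ?_
      have := hM.dist_le_mul _ (hn0 (x - c)) _ (hn0 (y - c))
      rw [Real.dist_eq, Real.dist_eq] at this
      exact this.trans (mul_le_mul_of_nonneg_left (hmn x y) M.coe_nonneg)
  have hv0 : ∀ x, 0 ≤ v x := fun x => le_min (abs_nonneg _) (abs_nonneg _)
  -- support
  have hvs : tsupport v ⊆ closedBall 0 (R₁ - η) \ ball c (R + η) := by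
    apply closure_minimal _ (isClosed_closedBall.sdiff isOpen_ball)
    intro x hx
    constructor
    · rw [mem_closedBall_zero_iff]
      by_contra! hlt
      apply hx
      apply le_antisymm _ (hv0 x)
      refine (min_le_left _ _).trans ?_
      simp only [a]
      rw [h.zr _ (le_max_of_le_left hlt.le), abs_zero]
    · rw [mem_ball, dist_eq_norm]
      intro hlt
      apply hx
      apply le_antisymm _ (hv0 x)
      refine (min_le_right _ _).trans ?_
      simp only [b]
      rw [h.zl _ (hn0 _) (min_le_of_left_le hlt.le), abs_zero]
  have hvc : HasCompactSupport v :=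
    (isCompact_closedBall (0 : EuclideanSpace ℝ (Fin N)) (R₁ - η)).of_isClosed_subset
      isClosed_closure (hvs.trans sdiff_subset)
  have hvΩ : tsupport v ⊆ ball 0 R₁ \ closedBall c R := by
    refine hvs.trans (sdiff_subset_sdiff (closedBall_subset_ball (by linarith))
      (closedBall_subset_ball (by linarith)))
  have hmain := lam1_mul_le_lip hp (isOpen_ball.sdiff isClosed_closedBall) hv hvc hvΩ
  -- energy
  have hgrad : ∀ x, ‖fderiv ℝ v x‖ ^ p ≤
      |deriv f (max ‖x‖ t)| ^ p + |deriv f (min ‖x - c‖ t)| ^ p := by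
    intro x
    have hle : ‖fderiv ℝ v x‖ ≤ max |deriv f (max ‖x‖ t)| |deriv f (min ‖x - c‖ t)| := by
      by_cases hdv : DifferentiableAt ℝ v x
      · apply le_of_forall_gt_imp_ge_of_dense
        intro K hK
        have hK0 : 0 ≤ K := (abs_nonneg _).trans ((le_max_left _ _).trans hK.le)
        apply hdv.hasFDerivAt.le_of_lip' hK0
        have hca : Tendsto (fun y : EuclideanSpace ℝ (Fin N) => max ‖y‖ t) (𝓝 x) (𝓝 (max ‖x‖ t)) :=
          (by fun_prop : Continuous (fun y : EuclideanSpace ℝ (Fin N) => max ‖y‖ t)).tendsto x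
        have hcb : Tendsto (fun y : EuclideanSpace ℝ (Fin N) => min ‖y - c‖ t) (𝓝 x)
            (𝓝 (min ‖x - c‖ t)) :=
          (by fun_prop : Continuous (fun y : EuclideanSpace ℝ (Fin N) => min ‖y - c‖ t)).tendsto x
        filter_upwards [hca.eventually (eventually_lip h.smooth _ ((le_max_left _ _).trans_lt hK)),
          hcb.eventually (eventually_lip h.smooth _ ((le_max_right _ _).trans_lt hK))] with y hy1 hy2
        rw [Real.norm_eq_abs]
        refine (abs_min_sub_min_le_max _ _ _ _).trans (max_le ?_ ?_)
        · refine (abs_abs_sub_abs_le_abs_sub _ _).trans (hy1.trans ?_)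
          exact mul_le_mul_of_nonneg_left (hmx y x) hK0
        · refine (abs_abs_sub_abs_le_abs_sub _ _).trans (hy2.trans ?_)
          exact mul_le_mul_of_nonneg_left (hmn y x) hK0
      · rw [fderiv_zero_of_not_differentiableAt hdv, norm_zero]
        positivity
    have hA : 0 ≤ |deriv f (max ‖x‖ t)| ^ p := by positivity
    have hB : 0 ≤ |deriv f (min ‖x - c‖ t)| ^ p := by positivity
    rcases le_max_iff.mp hle with h1 | h1
    · have := Real.rpow_le_rpow (norm_nonneg _) h1 hp0
      linarith
    · have := Real.rpow_le_rpow (norm_nonneg _) h1 hp0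
      linarith
  have iA : Integrable (fun x : EuclideanSpace ℝ (Fin N) => |deriv f (max ‖x‖ t)| ^ p) := by
    apply integrable_of_zero_far (c := 0) (ρ := R₁) (hrp.comp (by fun_prop))
    intro x hx
    rw [sub_zero] at hx
    change |deriv f (max ‖x‖ t)| ^ p = 0
    rw [h.deriv_zero (le_max_of_le_left hx.le), abs_zero, hz]
  have iB : ∀ c : EuclideanSpace ℝ (Fin N),
      Integrable (fun x : EuclideanSpace ℝ (Fin N) => |deriv f (min ‖x - c‖ t)| ^ p) := by
    intro c
    apply integrable_of_zero_far (c := c) (ρ := t) (hrp.comp (by fun_prop))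
    intro x hx
    change |deriv f (min ‖x - c‖ t)| ^ p = 0
    rw [min_eq_right hx.le, h.dft, abs_zero, hz]
  have iB0 := iB 0
  simp only [sub_zero] at iB0
  have hE : ∫ x, ‖fderiv ℝ v x‖ ^ p ≤ ∫ x : EuclideanSpace ℝ (Fin N), |deriv f ‖x‖| ^ p := by
    calc _ ≤ ∫ x, (|deriv f (max ‖x‖ t)| ^ p + |deriv f (min ‖x - c‖ t)| ^ p) := by
          apply integral_mono_of_nonneg
          · exact Eventually.of_forall fun x => by positivity
          · exact iA.add (iB c)
          · exact Eventually.of_forall hgrad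
      _ = (∫ x : EuclideanSpace ℝ (Fin N), |deriv f (max ‖x‖ t)| ^ p) +
          ∫ x : EuclideanSpace ℝ (Fin N), |deriv f (min ‖x‖ t)| ^ p := by
          rw [integral_add iA (iB c),
            integral_sub_right_eq_self (fun x : EuclideanSpace ℝ (Fin N) => |deriv f (min ‖x‖ t)| ^ p) c]
      _ = _ := by
          rw [← integral_add iA iB0]
          congr 1; ext x
          rcases le_total ‖x‖ t with hx | hx
          · rw [max_eq_right hx, min_eq_left hx, h.dft, abs_zero, hz, zero_add]
          · rw [max_eq_left hx, min_eq_right hx, h.dft, abs_zero, hz, add_zero]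
  -- mass
  have ja : Integrable (fun x => a x ^ p) := by
    apply integrable_of_zero_far (c := 0) (ρ := R₁) (hrp.comp (by fun_prop))
    intro x hx
    rw [sub_zero] at hx
    change |f (max ‖x‖ t)| ^ p = 0
    rw [h.zr _ (le_max_of_le_left (by linarith)), abs_zero, hz]
  have jb : ∀ c : EuclideanSpace ℝ (Fin N),
      Integrable (fun x : EuclideanSpace ℝ (Fin N) => 1 - |f (min ‖x - c‖ t)| ^ p) := by
    intro c
    apply integrable_of_zero_far (c := c) (ρ := t) (continuous_const.sub (hrp.comp (by fun_prop)))
    intro x hx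
    change 1 - |f (min ‖x - c‖ t)| ^ p = 0
    rw [min_eq_right hx.le, h.ft, abs_one, Real.one_rpow, sub_self]
  have jb0 := jb 0
  simp only [sub_zero] at jb0
  have ha1 : ∀ x, a x ≤ 1 := fun x => h.le1 _ (hx0 x)
  have hb1 : ∀ x, b x ≤ 1 := fun x => h.le1 _ (hn0 _)
  have jm : Integrable (fun x => 1 - (max (a x) (b x)) ^ p) := by
    apply integrable_of_zero_far (c := c) (ρ := t) (continuous_const.sub (hrp.comp (by fun_prop)))
    intro x hx
    have : b x = 1 := by simp only [b]; rw [min_eq_right hx.le, h.ft, abs_one]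
    change 1 - (max (a x) (b x)) ^ p = 0
    rw [this, max_eq_right (ha1 x), Real.one_rpow, sub_self]
  have hgain : (1 - (1 / 2) ^ p) * volume.real (ball ((R₁ - d / 2) • e) (d / 2)) ≤
      ∫ x, (1 - (max (a x) (b x)) ^ p) := by
    have hind : (1 - (1 / 2) ^ p) * volume.real (ball ((R₁ - d / 2) • e) (d / 2)) =
        ∫ x, indicator (ball ((R₁ - d / 2) • e) (d / 2)) (fun _ => (1 - (1 / 2) ^ p : ℝ)) x := by
      rw [integral_indicator_const _ measurableSet_ball, smul_eq_mul, mul_comm]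
    rw [hind]
    apply integral_mono _ jm
    · intro x
      simp only
      by_cases hx : x ∈ ball ((R₁ - d / 2) • e) (d / 2)
      · rw [indicator_of_mem hx]
        rw [mem_ball, dist_eq_norm] at hx
        have hxa : a x ≤ 1 / 2 := by
          apply hsm.2
          apply le_max_of_le_left
          have h1 : ‖(R₁ - d / 2) • e‖ = R₁ - d / 2 := by
            rw [norm_smul, he, mul_one, Real.norm_of_nonneg (by linarith)]
          have h2 := norm_sub_norm_le ((R₁ - d / 2) • e) x
          rw [norm_sub_rev] at h2
          linarith
        have hxb : b x ≤ 1 / 2 := by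
          apply hsm.1 _ (hn0 _)
          apply min_le_of_left_le
          have h1 : x - c = (x - (R₁ - d / 2) • e) + (R + d / 2) • e := by
            rw [hc, sub_add, ← sub_smul]; congr 2; ring
          have h2 : ‖(R + d / 2) • e‖ = R + d / 2 := by
            rw [norm_smul, he, mul_one, Real.norm_of_nonneg (by linarith)]
          rw [h1]
          have h3 := norm_add_le (x - (R₁ - d / 2) • e) ((R + d / 2) • e)
          linarith
        have := Real.rpow_le_rpow (le_max_of_le_left (abs_nonneg _)) (max_le hxa hxb) hp0
        linarith
      · rw [indicator_of_notMem hx]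
        have := Real.rpow_le_one (le_max_of_le_left (abs_nonneg _)) (max_le (ha1 x) (hb1 x)) hp0
        linarith
    · rw [integrable_indicator_iff measurableSet_ball]
      exact integrableOn_const measure_ball_lt_top.ne
  have hmass : ∫ x, |v x| ^ p = (∫ x : EuclideanSpace ℝ (Fin N), |f ‖x‖| ^ p) +
      ∫ x, (1 - (max (a x) (b x)) ^ p) := by
    have e1 : ∫ x, |v x| ^ p = ∫ x, (a x ^ p - (1 - |f (min ‖x - c‖ t)| ^ p) +
        (1 - (max (a x) (b x)) ^ p)) := by
      congr 1; ext x
      rw [abs_of_nonneg (hv0 x)]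
      have hb : |f (min ‖x - c‖ t)| = b x := rfl
      rw [hb]
      simp only [v]
      rcases le_total (a x) (b x) with hx | hx
      · rw [max_eq_right hx, min_eq_left hx]; ring
      · rw [max_eq_left hx, min_eq_right hx]; ring
    have e2 : ∫ x : EuclideanSpace ℝ (Fin N), |f ‖x‖| ^ p =
        (∫ x, a x ^ p) - ∫ x : EuclideanSpace ℝ (Fin N), (1 - |f (min ‖x‖ t)| ^ p) := by
      rw [← integral_sub ja jb0]
      congr 1; ext x
      simp only [a]
      rcases le_total ‖x‖ t with hx | hx
      · rw [max_eq_right hx, min_eq_left hx, h.ft, abs_one, Real.one_rpow]; ring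
      · rw [max_eq_left hx, min_eq_right hx, h.ft, abs_one, Real.one_rpow]; ring
    have jab : Integrable (fun x => a x ^ p - (1 - |f (min ‖x - c‖ t)| ^ p)) := ja.sub (jb c)
    rw [e1, integral_add jab jm, integral_sub ja (jb c),
      integral_sub_right_eq_self (fun x : EuclideanSpace ℝ (Fin N) => 1 - |f (min ‖x‖ t)| ^ p) c, ← e2]
  have hl0 : 0 ≤ lam1 p (ball 0 R₁ \ closedBall c R) := lam1_nonneg _ _
  calc _ ≤ lam1 p (ball 0 R₁ \ closedBall c R) * ∫ x, |v x| ^ p := by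
        apply mul_le_mul_of_nonneg_left _ hl0
        rw [hmass]
        linarith
    _ ≤ _ := hmain.trans hE

lemma annulus_pos {N : ℕ} (hN : 2 ≤ N) {p R R₁ : ℝ} (hp : 1 < p) (hR : 0 < R) (hRR : R < R₁) :
    ∃ l > 0, ∀ u : EuclideanSpace ℝ (Fin N) → ℝ,
    ContDiff ℝ (⊤ : ℕ∞) u → u ≠ 0 → HasCompactSupport u →
    tsupport u ⊆ ball 0 R₁ \ closedBall 0 R →
    l * (∫ x, |u x| ^ p) ≤ (∫ x, ‖fderiv ℝ u x‖ ^ p) := by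
  obtain ⟨l, hl, hlp⟩ := prof_lower hN hp hR hRR
  refine ⟨l, hl, fun u h1 h2 h3 h4 => ?_⟩
  by_contra! hlt
  have hm := mass_pos hp h1.continuous h2 h3
  rw [← div_lt_iff₀ hm] at hlt
  obtain ⟨Q, hQ1, hQ2⟩ := exists_between hlt
  rw [div_lt_iff₀ hm] at hQ1
  obtain ⟨f, t, η, hP⟩ := exists_prof hN hp hR hRR h1 h3 h4 hQ1
  exact absurd (hlp _ _ _ _ hP) (not_le.mpr hQ2)

lemma exists_unit {N : ℕ} (hN : 2 ≤ N) : ∃ e : EuclideanSpace ℝ (Fin N), ‖e‖ = 1 :=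
  ⟨EuclideanSpace.single ⟨0, by omega⟩ 1, by simp⟩

lemma affine_test {N : ℕ} {p : ℝ} {u : EuclideanSpace ℝ (Fin N) → ℝ}
    (h1 : ContDiff ℝ (⊤ : ℕ∞) u) (h2 : u ≠ 0) (h3 : HasCompactSupport u)
    {k : ℝ} (hk : 0 < k) (c : EuclideanSpace ℝ (Fin N)) :
    ContDiff ℝ (⊤ : ℕ∞) (fun x => u (k • (x - c))) ∧ (fun x => u (k • (x - c))) ≠ 0 ∧
    HasCompactSupport (fun x => u (k • (x - c))) ∧
    (∀ x ∈ tsupport (fun x => u (k • (x - c))), k • (x - c) ∈ tsupport u) ∧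
    ∫ x, |u (k • (x - c))| ^ p = |(k ^ N)⁻¹| * ∫ x, |u x| ^ p ∧
    ∫ x, ‖fderiv ℝ (fun x => u (k • (x - c))) x‖ ^ p =
      |(k ^ N)⁻¹| * (k ^ p * ∫ x, ‖fderiv ℝ u x‖ ^ p) := by
  have hA : ∀ x, HasFDerivAt (fun x : EuclideanSpace ℝ (Fin N) => k • (x - c))
      (k • ContinuousLinearMap.id ℝ _) x := fun x =>
    ((hasFDerivAt_id x).sub_const c).const_smul k
  have hts : ∀ x ∈ tsupport (fun x => u (k • (x - c))), k • (x - c) ∈ tsupport u := by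
    intro x hx
    have hcl : IsClosed ((fun x : EuclideanSpace ℝ (Fin N) => k • (x - c)) ⁻¹' tsupport u) :=
      (isClosed_tsupport u).preimage (by fun_prop)
    have hss : Function.support (fun x => u (k • (x - c))) ⊆
        (fun x : EuclideanSpace ℝ (Fin N) => k • (x - c)) ⁻¹' tsupport u :=
      fun y hy => subset_tsupport u (show k • (y - c) ∈ Function.support u from hy)
    exact closure_minimal hss hcl hx
  refine ⟨h1.comp (by fun_prop), ?_, ?_, hts, ?_, ?_⟩
  · intro h
    apply h2
    ext y
    have := congrFun h (k⁻¹ • y + c)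
    simpa [smul_smul, mul_inv_cancel₀ hk.ne'] using this
  · have himg : tsupport (fun x => u (k • (x - c))) ⊆
        (fun y : EuclideanSpace ℝ (Fin N) => k⁻¹ • y + c) '' tsupport u := by
      intro x hx
      refine ⟨_, hts x hx, ?_⟩
      simp [smul_smul, inv_mul_cancel₀ hk.ne']
    exact (IsCompact.image h3 (by fun_prop)).of_isClosed_subset (isClosed_tsupport _) himg
  · rw [integral_sub_right_eq_self (fun x => |u (k • x)| ^ p) c,
      Measure.integral_comp_smul volume (fun x => |u x| ^ p) k]
    simp
  · have hd : ∀ x, ‖fderiv ℝ (fun x => u (k • (x - c))) x‖ ^ p =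
        k ^ p * ‖fderiv ℝ u (k • (x - c))‖ ^ p := by
      intro x
      have := ((h1.differentiable (by simp) (k • (x - c))).hasFDerivAt).comp x (hA x)
      have h' : fderiv ℝ (fun x => u (k • (x - c))) x = k • fderiv ℝ u (k • (x - c)) := by
        refine this.fderiv.trans ?_
        ext y
        simp
      rw [h', norm_smul, Real.mul_rpow (norm_nonneg _) (norm_nonneg _), Real.norm_of_nonneg hk.le]
    simp_rw [hd]
    rw [integral_const_mul, integral_sub_right_eq_self (fun x => ‖fderiv ℝ u (k • x)‖ ^ p) c,
      Measure.integral_comp_smul volume (fun x => ‖fderiv ℝ u x‖ ^ p) k]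
    simp
    ring

lemma ball_pos {N : ℕ} (hN : 2 ≤ N) {p R : ℝ} (hp : 1 < p) (hR : 0 < R) :
    0 < lam1 p (ball (0 : EuclideanSpace ℝ (Fin N)) R) := by
  obtain ⟨l, hl, hlp⟩ := annulus_pos hN hp hR (show R < 3 * R by linarith)
  obtain ⟨e, he⟩ := exists_unit hN
  refine hl.trans_le (le_lam1 hp isOpen_ball (nonempty_ball.mpr hR) fun u h1 h2 h3 h4 => ?_)
  obtain ⟨g1, g2, g3, g4, g5, g6⟩ := affine_test (p := p) h1 h2 h3 one_pos ((2 * R) • e)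
  have hn : ‖(2 * R) • e‖ = 2 * R := by
    rw [norm_smul, he, mul_one, Real.norm_of_nonneg (by linarith)]
  have := hlp _ g1 g2 g3 (by
    intro x hx
    have hx1 := h4 (g4 x hx)
    rw [one_smul, mem_ball_zero_iff] at hx1
    have t1 := norm_sub_norm_le x ((2 * R) • e)
    have t2 := norm_sub_norm_le ((2 * R) • e) x
    rw [norm_sub_rev] at t2
    refine ⟨?_, ?_⟩
    · rw [mem_ball_zero_iff]; linarith
    · rw [mem_closedBall_zero_iff]; linarith)
  rw [g5, g6] at this
  simpa using this

lemma ball_lt {N : ℕ} (hN : 2 ≤ N) {p R R' : ℝ} (hp : 1 < p) (hR : 0 < R) (hRR : R < R')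
    (c : EuclideanSpace ℝ (Fin N)) :
    lam1 p (ball c R') < lam1 p (ball (0 : EuclideanSpace ℝ (Fin N)) R) := by
  have hpos := ball_pos hN hp hR
  have hR' : 0 < R' := hR.trans hRR
  have hk : 0 < R / R' := by positivity
  have hk1 : (R / R') ^ p < 1 :=
    Real.rpow_lt_one hk.le ((div_lt_one hR').mpr hRR) (by linarith)
  have hkp : 0 < (R / R') ^ p := by positivity
  have key : lam1 p (ball c R') / (R / R') ^ p ≤ lam1 p (ball (0 : EuclideanSpace ℝ (Fin N)) R) := by
    refine le_lam1 hp isOpen_ball (nonempty_ball.mpr hR) fun u h1 h2 h3 h4 => ?_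
    obtain ⟨g1, g2, g3, g4, g5, g6⟩ := affine_test (p := p) h1 h2 h3 hk c
    have := lam1_mul_le hp (Ω := ball c R') g1 g3 (by
      intro x hx
      have hx1 := h4 (g4 x hx)
      rw [mem_ball_zero_iff, norm_smul, Real.norm_of_nonneg hk.le, div_mul_eq_mul_div,
        div_lt_iff₀ hR'] at hx1
      rw [mem_ball, dist_eq_norm]
      exact lt_of_mul_lt_mul_left hx1 hR.le)
    rw [g5, g6] at this
    have hJ : 0 < |((R / R') ^ N)⁻¹| := by positivity
    rw [mul_left_comm] at this
    have := le_of_mul_le_mul_left this hJ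
    rw [div_mul_eq_mul_div, div_le_iff₀ hkp]
    linarith
  rw [div_le_iff₀ hkp] at key
  nlinarith

lemma annulus_nonempty {N : ℕ} {R R₁ s : ℝ} (hR : 0 < R) (hRR : R < R₁) (hs : 0 < s)
    {e : EuclideanSpace ℝ (Fin N)} (he : ‖e‖ = 1) :
    (ball 0 R₁ \ closedBall (s • e) R).Nonempty := by
  refine ⟨(-R) • e, ?_, ?_⟩
  · rw [mem_ball_zero_iff, norm_smul, he, mul_one, norm_neg, Real.norm_of_nonneg hR.le]
    exact hRR
  · rw [mem_closedBall, dist_eq_norm, ← sub_smul, norm_smul, he, mul_one, Real.norm_eq_abs,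
      abs_of_neg (by linarith)]
    linarith

lemma annulus_lt {N : ℕ} (hN : 2 ≤ N) {p R R₁ : ℝ} (hp : 1 < p) (hR : 0 < R) (hRR : R < R₁)
    {e : EuclideanSpace ℝ (Fin N)} (he : ‖e‖ = 1) :
    ∃ s, 0 < s ∧ s < R₁ - R ∧ lam1 p (ball 0 R₁ \ closedBall (s • e) R) <
      lam1 p (ball (0 : EuclideanSpace ℝ (Fin N)) R₁ \ closedBall 0 R) := by
  have hop : IsOpen (ball (0 : EuclideanSpace ℝ (Fin N)) R₁ \ closedBall 0 R) :=
    isOpen_ball.sdiff isClosed_closedBall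
  have hne : (ball (0 : EuclideanSpace ℝ (Fin N)) R₁ \ closedBall 0 R).Nonempty := by
    refine ⟨((R + R₁) / 2) • e, ?_, ?_⟩
    · rw [mem_ball_zero_iff, norm_smul, he, mul_one, Real.norm_of_nonneg (by linarith)]
      linarith
    · rw [mem_closedBall_zero_iff, norm_smul, he, mul_one, Real.norm_of_nonneg (by linarith)]
      linarith
  set lam := lam1 p (ball (0 : EuclideanSpace ℝ (Fin N)) R₁ \ closedBall 0 R) with hlam
  have hpos : 0 < lam := by
    obtain ⟨l, hl, hlp⟩ := annulus_pos hN hp hR hRR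
    exact hl.trans_le (le_lam1 hp hop hne hlp)
  obtain ⟨d, hd, hd1, hsm⟩ := prof_small hN hp hR hRR (lam + 1) (by linarith)
  refine ⟨R₁ - R - d, by linarith, by linarith, ?_⟩
  set V := volume.real (closedBall (0 : EuclideanSpace ℝ (Fin N)) R₁) with hV
  have hV0 : 0 < V := ballvol_pos (hR.trans hRR)
  set γ := (1 - (1 / 2) ^ p) * volume.real (ball ((R₁ - d / 2) • e) (d / 2)) with hγ
  have hγ0 : 0 < γ := by
    apply mul_pos
    · have : ((1:ℝ) / 2) ^ p < 1 := Real.rpow_lt_one (by norm_num) (by norm_num) (by linarith)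
      linarith
    · exact ENNReal.toReal_pos (measure_ball_pos volume _ (by linarith)).ne' measure_ball_lt_top.ne
  set m := lam1 p (ball 0 R₁ \ closedBall ((R₁ - R - d) • e) R) with hm
  have hm0 : 0 ≤ m := lam1_nonneg _ _
  have key : ∀ Q, lam < Q → Q ≤ lam + 1 → m * (V + γ) ≤ Q * V := by
    intro Q hQ hQ1
    obtain ⟨u, h1, h2, h3, h4, h5⟩ := exists_of_lam1_lt hp hop hne hQ
    obtain ⟨f, t, η, hP⟩ := exists_prof hN hp hR hRR h1 h3 h4 h5
    have hc := lam1_competitor hp hR hRR hP hd hd1 (hsm _ _ _ _ hP hQ1) he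
    have hml := hP.mass_le hp
    have hen := hP.en
    set I := ∫ x : EuclideanSpace ℝ (Fin N), |f ‖x‖| ^ p
    have hI0 : 0 ≤ I := integral_nonneg fun x => by positivity
    have hc' : m * (I + γ) ≤ Q * I := hc.trans hen.le
    have hmQ : m ≤ Q := by
      by_contra! hlt
      nlinarith
    nlinarith
  have lim : m * (V + γ) ≤ lam * V := by
    rw [← div_le_iff₀ hV0]
    apply le_of_forall_gt_imp_ge_of_dense
    intro Q hQ
    rw [div_le_iff₀ hV0]
    refine (key (min Q (lam + 1)) (lt_min hQ (by linarith)) (min_le_right _ _)).trans ?_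
    exact mul_le_mul_of_nonneg_right (min_le_left _ _) hV0.le
  by_contra! hge
  nlinarith

theorem stmt7 (N : ℕ) (hN : 2 ≤ N) (p : ℝ) (hp : 1 < p)
    (R R₁ : ℝ) (hR : 0 < R) (hRR : R < R₁) :
    ∃ Ω₁ Ω₂ : Set (EuclideanSpace ℝ (Fin N)),
      IsOpen Ω₁ ∧ IsOpen Ω₂ ∧ Ω₁.Nonempty ∧ Ω₂.Nonempty ∧ Disjoint Ω₁ Ω₂ ∧
      Ω₁ ⊆ ball 0 R₁ ∧ Ω₂ ⊆ ball 0 R₁ ∧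
      lam1 p Ω₁ < lam1 p (ball (0 : EuclideanSpace ℝ (Fin N)) R) ∧
      lam1 p Ω₂ < lam1 p (ball (0 : EuclideanSpace ℝ (Fin N)) R₁ \ closure (ball 0 R)) := by
  obtain ⟨e, he⟩ := exists_unit hN
  obtain ⟨s, hs, hs1, hlt⟩ := annulus_lt hN hp hR hRR he
  obtain ⟨u, h1, h2, h3, h4, h5⟩ := exists_of_lam1_lt hp
    (isOpen_ball.sdiff isClosed_closedBall) (annulus_nonempty hR hRR hs he) hlt
  have hns : ‖s • e‖ = s := by rw [norm_smul, he, mul_one, Real.norm_of_nonneg hs.le]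
  have hne : (tsupport u).Nonempty := by
    obtain ⟨x, hx⟩ := Function.ne_iff.mp h2
    exact ⟨x, subset_tsupport u hx⟩
  obtain ⟨y, hy, hmin⟩ := IsCompact.exists_isMinOn h3 hne
    (f := fun x => dist x (s • e)) (by fun_prop)
  have hyR : R < dist y (s • e) := not_le.mp (h4 hy).2
  obtain ⟨R', hR1, hR2⟩ := exists_between (lt_min hyR (show R < R₁ - s by linarith))
  have hR3 := hR2.trans_le (min_le_left _ _)
  have hR4 := hR2.trans_le (min_le_right _ _)
  have hsub : tsupport u ⊆ ball 0 R₁ \ closedBall (s • e) R' := by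
    intro x hx
    refine ⟨(h4 hx).1, ?_⟩
    rw [mem_closedBall, not_le]
    exact hR3.trans_le (hmin hx)
  refine ⟨ball (s • e) R', ball 0 R₁ \ closedBall (s • e) R', isOpen_ball,
    isOpen_ball.sdiff isClosed_closedBall, nonempty_ball.mpr (hR.trans hR1), hne.mono hsub, ?_, ?_,
    sdiff_subset, ball_lt hN hp hR hR1 _, ?_⟩
  · rw [Set.disjoint_left]
    intro x hx hx2
    exact hx2.2 (ball_subset_closedBall hx)
  · apply ball_subset_ball'
    rw [dist_zero_right, hns]
    linarith
  · rw [closure_ball _ hR.ne']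
    refine (lam1_le hp h1 h2 h3 hsub).trans_lt ?_
    rw [div_lt_iff₀ (mass_pos hp h1.continuous h2 h3)]
    exact h5
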